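/- arXiv:1006.4088 — 2 statements merged into one kernel-verified Lean document; each statement's English description precedes it below -/
import Mathlib

section
/- Suppose X ∈ ℝ^{n₁×n₂}, y = 𝒜(X) + w with ‖𝒜*(w)‖₂ ≤ λ, and X̂ satisfies the matrix Dantzig selector constraint ‖𝒜*(y − 𝒜(X̂))‖₂ ≤ λ. Then the error matrix H = X̂ − X satisfies ‖𝒜*(𝒜(H))‖₂ ≤ 2λ, and consequently ‖𝒜(H)‖₂² = ⟨𝒜(H), 𝒜(H)⟩ ≤ 2λ·‖H‖_*. -/
open scoped BigOperators

noncomputable section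

/-- Frobenius norm of a real matrix. -/
def frobNorm {n₁ n₂ : ℕ} (X : Matrix (Fin n₁) (Fin n₂) ℝ) : ℝ :=
  Real.sqrt (∑ i, ∑ j, (X i j) ^ 2)

/-- Singular values of a real matrix: square roots of eigenvalues of `X * Xᴴ`. -/
def singVals {n₁ n₂ : ℕ} (X : Matrix (Fin n₁) (Fin n₂) ℝ) : Fin n₁ → ℝ :=
  fun i => Real.sqrt ((Matrix.isHermitian_mul_conjTranspose_self X).eigenvalues i)

/-- Nuclear norm: sum of singular values. -/
def nuclearNorm {n₁ n₂ : ℕ} (X : Matrix (Fin n₁) (Fin n₂) ℝ) : ℝ :=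
  ∑ i, singVals X i

/-- Operator norm: largest singular value. -/
def matOpNorm {n₁ n₂ : ℕ} (X : Matrix (Fin n₁) (Fin n₂) ℝ) : ℝ :=
  ⨆ i, singVals X i

/-- ℓ*-rank. -/
def lstarRank {n₁ n₂ : ℕ} (X : Matrix (Fin n₁) (Fin n₂) ℝ) : ℝ :=
  nuclearNorm X ^ 2 / frobNorm X ^ 2

/-- Euclidean norm of a vector. -/
def vnorm {m : ℕ} (v : Fin m → ℝ) : ℝ :=
  Real.sqrt (∑ k, (v k) ^ 2)

/-- Matrix inner product. -/
def matInner {n₁ n₂ : ℕ} (X Y : Matrix (Fin n₁) (Fin n₂) ℝ) : ℝ :=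
  (X.transpose * Y).trace

def cmsvMin {n₁ n₂ m : ℕ} (A : Matrix (Fin n₁) (Fin n₂) ℝ → (Fin m → ℝ)) (τ : ℝ) : ℝ :=
  sInf {c | ∃ X : Matrix (Fin n₁) (Fin n₂) ℝ, X ≠ 0 ∧ lstarRank X ≤ τ ∧ c = vnorm (A X) / frobNorm X}

def cmsvMax {n₁ n₂ m : ℕ} (A : Matrix (Fin n₁) (Fin n₂) ℝ → (Fin m → ℝ)) (τ : ℝ) : ℝ :=
  sSup {c | ∃ X : Matrix (Fin n₁) (Fin n₂) ℝ, X ≠ 0 ∧ lstarRank X ≤ τ ∧ c = vnorm (A X) / frobNorm X}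

def rcsvMin {n₁ n₂ m : ℕ} (A : Matrix (Fin n₁) (Fin n₂) ℝ → (Fin m → ℝ)) (r : ℕ) : ℝ :=
  sInf {c | ∃ X : Matrix (Fin n₁) (Fin n₂) ℝ, X ≠ 0 ∧ X.rank ≤ r ∧ c = vnorm (A X) / frobNorm X}

def rcsvMax {n₁ n₂ m : ℕ} (A : Matrix (Fin n₁) (Fin n₂) ℝ → (Fin m → ℝ)) (r : ℕ) : ℝ :=
  sSup {c | ∃ X : Matrix (Fin n₁) (Fin n₂) ℝ, X ≠ 0 ∧ X.rank ≤ r ∧ c = vnorm (A X) / frobNorm X}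

def mRIC {n₁ n₂ m : ℕ} (A : Matrix (Fin n₁) (Fin n₂) ℝ → (Fin m → ℝ)) (r : ℕ) : ℝ :=
  sInf {δ : ℝ | 0 < δ ∧ ∀ X : Matrix (Fin n₁) (Fin n₂) ℝ, X ≠ 0 → X.rank ≤ r →
    1 - δ ≤ (vnorm (A X)) ^ 2 / (frobNorm X) ^ 2 ∧ (vnorm (A X)) ^ 2 / (frobNorm X) ^ 2 ≤ 1 + δ}

def opOf {n₁ n₂ m : ℕ} (A : Fin m → Matrix (Fin n₁) (Fin n₂) ℝ) :
    Matrix (Fin n₁) (Fin n₂) ℝ → (Fin m → ℝ) :=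
  fun X k => matInner (A k) X


open Matrix

lemma vnorm_eq_norm {m : ℕ} (v : Fin m → ℝ) : vnorm v = ‖WithLp.toLp 2 v‖ := by
  simp [vnorm, EuclideanSpace.norm_eq]

lemma vnorm_nonneg {m : ℕ} (v : Fin m → ℝ) : 0 ≤ vnorm v := Real.sqrt_nonneg _

lemma vnorm_sq {m : ℕ} (v : Fin m → ℝ) : vnorm v ^ 2 = v ⬝ᵥ v := by
  rw [vnorm, Real.sq_sqrt (Finset.sum_nonneg fun _ _ => sq_nonneg _)]
  simp [dotProduct, sq]

lemma vnorm_sub_le {m : ℕ} (v w : Fin m → ℝ) : vnorm (v - w) ≤ vnorm v + vnorm w := by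
  simp only [vnorm_eq_norm, WithLp.toLp_sub]
  exact norm_sub_le _ _

lemma dotProduct_le_vnorm_mul_vnorm {m : ℕ} (v w : Fin m → ℝ) :
    v ⬝ᵥ w ≤ vnorm v * vnorm w := by
  simpa [vnorm, dotProduct] using Real.sum_mul_le_sqrt_mul_sqrt Finset.univ v w

lemma singVals_nonneg {n₁ n₂ : ℕ} (X : Matrix (Fin n₁) (Fin n₂) ℝ) (i : Fin n₁) :
    0 ≤ singVals X i := Real.sqrt_nonneg _

lemma nuclearNorm_nonneg {n₁ n₂ : ℕ} (X : Matrix (Fin n₁) (Fin n₂) ℝ) : 0 ≤ nuclearNorm X :=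
  Finset.sum_nonneg fun i _ => singVals_nonneg X i

lemma matOpNorm_nonneg {n₁ n₂ : ℕ} (X : Matrix (Fin n₁) (Fin n₂) ℝ) : 0 ≤ matOpNorm X :=
  Real.iSup_nonneg fun i => singVals_nonneg X i

lemma singVals_le_matOpNorm {n₁ n₂ : ℕ} (X : Matrix (Fin n₁) (Fin n₂) ℝ) (i : Fin n₁) :
    singVals X i ≤ matOpNorm X :=
  le_ciSup (Set.finite_range (singVals X)).bddAbove i

/-- The rows of `V` are left singular vectors of `X`. -/
lemma exists_orthogonal_diagonalization {n₁ n₂ : ℕ} (X : Matrix (Fin n₁) (Fin n₂) ℝ) :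
    ∃ V : Matrix (Fin n₁) (Fin n₁) ℝ, V * Vᵀ = 1 ∧ Vᵀ * V = 1 ∧
      (V * X) * (V * X)ᵀ = diagonal fun i => singVals X i ^ 2 := by
  have hX := isHermitian_mul_conjTranspose_self X
  have hst : star (hX.eigenvectorUnitary : Matrix (Fin n₁) (Fin n₁) ℝ) =
      (hX.eigenvectorUnitary : Matrix (Fin n₁) (Fin n₁) ℝ)ᵀ := by
    rw [star_eq_conjTranspose, conjTranspose_eq_transpose_of_trivial]
  refine ⟨(hX.eigenvectorUnitary : Matrix (Fin n₁) (Fin n₁) ℝ)ᵀ, ?_, ?_, ?_⟩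
  · rw [transpose_transpose, ← hst, Unitary.coe_star_mul_self]
  · rw [transpose_transpose, ← hst, Unitary.mul_star_self_of_mem (SetLike.coe_mem _)]
  · have h := hX.conjStarAlgAut_star_eigenvectorUnitary
    rw [Unitary.conjStarAlgAut_star_apply, hst] at h
    have hd : (fun i => singVals X i ^ 2) = RCLike.ofReal ∘ hX.eigenvalues := by
      funext i
      simpa [singVals] using
        Real.sq_sqrt (eigenvalues_self_mul_conjTranspose_nonneg X i)
    rw [hd, ← h]
    simp only [transpose_mul, transpose_transpose, Matrix.mul_assoc,
      conjTranspose_eq_transpose_of_trivial]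

lemma vnorm_vecMul_le {n₁ n₂ : ℕ} (X : Matrix (Fin n₁) (Fin n₂) ℝ) (v : Fin n₁ → ℝ) :
    vnorm (v ᵥ* X) ≤ matOpNorm X * vnorm v := by
  obtain ⟨V, -, hV, hVX⟩ := exists_orthogonal_diagonalization X
  set u := V *ᵥ v with hu
  have hv : u ᵥ* V = v := by
    rw [hu, ← vecMul_transpose, vecMul_vecMul, hV, vecMul_one]
  have huv : vnorm v ^ 2 = u ⬝ᵥ u := by
    rw [vnorm_sq, hu, dotProduct_mulVec, ← hu, hv]
  refine le_of_sq_le_sq ?_ (mul_nonneg (matOpNorm_nonneg X) (vnorm_nonneg v))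
  have h : vnorm (v ᵥ* X) ^ 2 = ∑ i, singVals X i ^ 2 * u i ^ 2 := by
    have h1 : v ᵥ* X = u ᵥ* (V * X) := by rw [← vecMul_vecMul, hv]
    have h2 : u ᵥ* (V * X) = (V * X)ᵀ *ᵥ u := (mulVec_transpose _ _).symm
    rw [vnorm_sq, h1]
    nth_rw 2 [h2]
    rw [← dotProduct_mulVec, mulVec_mulVec, hVX]
    simp only [dotProduct, mulVec_diagonal]
    exact Finset.sum_congr rfl fun i _ => by ring
  rw [h, mul_pow, huv, dotProduct, Finset.mul_sum]
  refine Finset.sum_le_sum fun i _ => ?_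
  rw [← sq]
  gcongr
  · exact singVals_nonneg X i
  · exact singVals_le_matOpNorm X i

lemma vnorm_row_eq_singVals {n₁ n₂ : ℕ} {X : Matrix (Fin n₁) (Fin n₂) ℝ}
    {V : Matrix (Fin n₁) (Fin n₁) ℝ}
    (hVX : (V * X) * (V * X)ᵀ = diagonal fun i => singVals X i ^ 2) (i : Fin n₁) :
    vnorm (V i ᵥ* X) = singVals X i := by
  rw [← sq_eq_sq₀ (vnorm_nonneg _) (singVals_nonneg X i), vnorm_sq]
  have h := congrFun (congrFun hVX i) i
  rwa [diagonal_apply_eq] at h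

lemma vnorm_row_eq_one {n : ℕ} {V : Matrix (Fin n) (Fin n) ℝ} (hV : V * Vᵀ = 1) (i : Fin n) :
    vnorm (V i) = 1 := by
  rw [← sq_eq_sq₀ (vnorm_nonneg _) zero_le_one, vnorm_sq, one_pow]
  have h := congrFun (congrFun hV i) i
  rwa [one_apply_eq] at h

lemma matOpNorm_sub_le {n₁ n₂ : ℕ} (X Y : Matrix (Fin n₁) (Fin n₂) ℝ) :
    matOpNorm (X - Y) ≤ matOpNorm X + matOpNorm Y := by
  obtain ⟨V, hV, -, hVX⟩ := exists_orthogonal_diagonalization (X - Y)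
  refine Real.iSup_le (fun i => ?_) (add_nonneg (matOpNorm_nonneg X) (matOpNorm_nonneg Y))
  have hX := vnorm_vecMul_le X (V i)
  have hY := vnorm_vecMul_le Y (V i)
  rw [vnorm_row_eq_one hV, mul_one] at hX hY
  rw [← vnorm_row_eq_singVals hVX, vecMul_sub]
  exact (vnorm_sub_le _ _).trans (add_le_add hX hY)

/-- Duality between the nuclear norm and the operator norm. -/
lemma matInner_le_matOpNorm_mul_nuclearNorm {n₁ n₂ : ℕ} (X Y : Matrix (Fin n₁) (Fin n₂) ℝ) :
    matInner X Y ≤ matOpNorm Y * nuclearNorm X := by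
  obtain ⟨V, hV, hV', hVX⟩ := exists_orthogonal_diagonalization X
  have h : matInner X Y = ∑ i, (V i ᵥ* Y) ⬝ᵥ (V i ᵥ* X) := by
    calc matInner X Y = ((V * X)ᵀ * (V * Y)).trace := by
          rw [matInner, transpose_mul, Matrix.mul_assoc, ← Matrix.mul_assoc Vᵀ, hV',
            Matrix.one_mul]
      _ = ((V * Y) * (V * X)ᵀ).trace := trace_mul_comm _ _
      _ = ∑ i, (V i ᵥ* Y) ⬝ᵥ (V i ᵥ* X) := rfl
  rw [h, nuclearNorm, Finset.mul_sum]
  refine Finset.sum_le_sum fun i _ => (dotProduct_le_vnorm_mul_vnorm _ _).trans ?_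
  have hY := vnorm_vecMul_le Y (V i)
  rw [vnorm_row_eq_one hV, mul_one] at hY
  rw [vnorm_row_eq_singVals hVX]
  exact mul_le_mul_of_nonneg_right hY (singVals_nonneg X i)

/-- any matrix satisfying the Dantzig selector constraint has error matrix `H`
with `‖𝒜*(𝒜(H))‖₂ ≤ 2λ` and `‖𝒜(H)‖₂² ≤ 2λ·‖H‖_*`. -/
theorem stmt8 {n₁ n₂ m : ℕ}
    (𝒜 : Matrix (Fin n₁) (Fin n₂) ℝ →ₗ[ℝ] (Fin m → ℝ))
    (Astar : (Fin m → ℝ) →ₗ[ℝ] Matrix (Fin n₁) (Fin n₂) ℝ)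
    (hadj : ∀ (X : Matrix (Fin n₁) (Fin n₂) ℝ) (z : Fin m → ℝ),
      (∑ k, 𝒜 X k * z k) = matInner X (Astar z))
    (X : Matrix (Fin n₁) (Fin n₂) ℝ)
    (w : Fin m → ℝ) (lam : ℝ) (hw : matOpNorm (Astar w) ≤ lam)
    (y : Fin m → ℝ) (hy : y = 𝒜 X + w)
    (Xhat : Matrix (Fin n₁) (Fin n₂) ℝ)
    (hfeas : matOpNorm (Astar (y - 𝒜 Xhat)) ≤ lam) :
    matOpNorm (Astar (𝒜 (Xhat - X))) ≤ 2 * lam ∧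
    vnorm (𝒜 (Xhat - X)) ^ 2 ≤ 2 * lam * nuclearNorm (Xhat - X) := by
  have hH : Astar (𝒜 (Xhat - X)) = Astar w - Astar (y - 𝒜 Xhat) := by
    rw [← map_sub, hy, map_sub]
    congr 1
    abel
  have hop : matOpNorm (Astar (𝒜 (Xhat - X))) ≤ 2 * lam := by
    rw [hH]
    linarith [matOpNorm_sub_le (Astar w) (Astar (y - 𝒜 Xhat))]
  refine ⟨hop, ?_⟩
  rw [vnorm_sq, dotProduct, hadj]
  exact (matInner_le_matOpNorm_mul_nuclearNorm _ _).trans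
    (mul_le_mul_of_nonneg_right hop (nuclearNorm_nonneg _))

end
end

section
/- Let 𝒜 : ℝ^{n₁×n₂} → ℝ^m be a random linear operator represented by matrices A₁,…,A_m whose entries are i.i.d. standard Gaussian N(0,1) random variables, and let τ ∈ [1, n₁]. Then E[ρ_τ^max(𝒜/√m)] ≤ 1 + 3·√(τ n₂ / m). -/
open scoped BigOperators

noncomputable section

open MeasureTheory ProbabilityTheory

/-- The Gaussian ensemble: all entries of the `m` representing matrices are i.i.d. `N(0,1)`. -/
def gaussianEnsemble (m n₁ n₂ : ℕ) : Measure ((Fin m × Fin n₁ × Fin n₂) → ℝ) :=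
  Measure.pi fun _ => gaussianReal 0 1

/-- The collection of representing matrices determined by a sample `ω`. -/
def ensembleMatrices {m n₁ n₂ : ℕ} (ω : (Fin m × Fin n₁ × Fin n₂) → ℝ) :
    Fin m → Matrix (Fin n₁) (Fin n₂) ℝ :=
  fun k => Matrix.of fun i j => ω (k, i, j)

/-- The scaled operator `𝒜/√m` determined by a sample `ω`. -/
def scaledOp {m n₁ n₂ : ℕ} (ω : (Fin m × Fin n₁ × Fin n₂) → ℝ) :
    Matrix (Fin n₁) (Fin n₂) ℝ → (Fin m → ℝ) :=
  fun X k => opOf (ensembleMatrices ω) X k / Real.sqrt m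

theorem hasDerivAt_gaussianPDFReal_std (x : ℝ) :
    HasDerivAt (gaussianPDFReal 0 1) (-x * gaussianPDFReal 0 1 x) x := by
  have h : HasDerivAt (fun y : ℝ => (√(2 * Real.pi * ((1 : NNReal) : ℝ)))⁻¹ *
      Real.exp (-(y - 0) ^ 2 / (2 * ((1 : NNReal) : ℝ))))
      ((√(2 * Real.pi * ((1 : NNReal) : ℝ)))⁻¹ * (Real.exp (-(x - 0) ^ 2 / (2 * ((1 : NNReal) : ℝ)))
        * (-(2 * (x - 0) ^ 1 * 1) / (2 * ((1 : NNReal) : ℝ))))) x := by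
    have := ((((hasDerivAt_id x).sub_const 0).pow 2).neg.div_const
      (2 * ((1 : NNReal) : ℝ))).exp.const_mul ((√(2 * Real.pi * ((1 : NNReal) : ℝ)))⁻¹)
    simpa using this
  rw [gaussianPDFReal_def]
  convert h using 1
  simp
  ring

theorem integrable_gaussianReal_std_iff (f : ℝ → ℝ) :
    Integrable f (gaussianReal 0 1) ↔ Integrable fun x => gaussianPDFReal 0 1 x * f x := by
  rw [gaussianReal_of_var_ne_zero 0 one_ne_zero,
    integrable_withDensity_iff_integrable_smul₀' (measurable_gaussianPDF 0 1).aemeasurable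
      (by simp [gaussianPDF])]
  simp [gaussianPDF, gaussianPDFReal_nonneg, smul_eq_mul]

/-- **Stein's identity** for the standard Gaussian. -/
theorem integral_mul_gaussianReal_std {f f' : ℝ → ℝ} {C : ℝ}
    (hf : ∀ x, HasDerivAt f (f' x) x) (hfC : ∀ x, |f x| ≤ C) (hf'C : ∀ x, |f' x| ≤ C) :
    ∫ x, x * f x ∂(gaussianReal 0 1) = ∫ x, f' x ∂(gaussianReal 0 1) := by
  have hfm : Measurable f :=
    (continuous_iff_continuousAt.2 fun x => (hf x).continuousAt).measurable
  have hf'm : Measurable f' := by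
    have : f' = deriv f := funext fun x => (hf x).deriv.symm
    rw [this]; exact measurable_deriv f
  have hid : Integrable (fun x : ℝ => x) (gaussianReal 0 1) :=
    (memLp_id_gaussianReal 1).integrable (by simp)
  have h1 : Integrable (fun x => x * f x) (gaussianReal 0 1) :=
    hid.mul_bdd (c := C) hfm.aestronglyMeasurable (.of_forall hfC)
  have h2 : Integrable f (gaussianReal 0 1) :=
    Integrable.of_bound hfm.aestronglyMeasurable C (.of_forall hfC)
  have h3 : Integrable f' (gaussianReal 0 1) :=
    Integrable.of_bound hf'm.aestronglyMeasurable C (.of_forall hf'C)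
  rw [integrable_gaussianReal_std_iff] at h1 h2 h3
  rw [integral_gaussianReal_eq_integral_smul one_ne_zero,
    integral_gaussianReal_eq_integral_smul one_ne_zero]
  have := integral_mul_deriv_eq_deriv_mul_of_integrable (u := gaussianPDFReal 0 1) (v := f)
    (fun x _ => hasDerivAt_gaussianPDFReal_std x) (fun x _ => hf x) h3
    (by refine h1.neg.congr (.of_forall fun x => ?_); simp; ring) h2
  simp only [smul_eq_mul]
  rw [this, ← integral_neg]
  congr 1; ext x; ring

section StandardGaussian

/-- The standard Gaussian measure on `ι → ℝ`. -/
abbrev stdGauss (ι : Type*) [Fintype ι] : Measure (ι → ℝ) :=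
  Measure.pi fun _ => gaussianReal 0 1

variable {ι : Type*} [Fintype ι]

theorem measurePreserving_update_stdGauss [DecidableEq ι] (k : ι) :
    MeasurePreserving (fun p : (ι → ℝ) × ℝ => Function.update p.1 k p.2)
      ((stdGauss ι).prod (gaussianReal 0 1)) (stdGauss ι) := by
  have hm : Measurable (fun p : (ι → ℝ) × ℝ => Function.update p.1 k p.2) := by
    refine measurable_pi_iff.2 fun i => ?_
    by_cases h : i = k
    · subst h; simpa using measurable_snd
    · simp only [Function.update_of_ne h]
      fun_prop
  refine ⟨hm, (Measure.pi_eq fun s hs => ?_).symm⟩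
  rw [Measure.map_apply hm (MeasurableSet.univ_pi hs)]
  have : (fun p : (ι → ℝ) × ℝ => Function.update p.1 k p.2) ⁻¹' Set.univ.pi s =
      (Set.univ.pi (Function.update s k Set.univ)) ×ˢ s k := by
    ext ⟨x, y⟩
    simp only [Set.mem_preimage, Set.mem_pi, Set.mem_univ, true_imp_iff, Set.mem_prod]
    constructor
    · refine fun h => ⟨fun i => ?_, by simpa using h k⟩
      by_cases hi : i = k
      · subst hi; simp
      · simpa [hi] using h i
    · rintro ⟨h, hy⟩ i
      by_cases hi : i = k
      · subst hi; simpa using hy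
      · simpa [hi] using h i
  rw [this, Measure.prod_prod, Measure.pi_pi, ← Finset.prod_erase_mul _ _ (Finset.mem_univ k),
    ← Finset.prod_erase_mul Finset.univ (fun i => gaussianReal 0 1 (s i)) (Finset.mem_univ k)]
  simp only [Function.update_self, measure_univ, mul_one]
  congr 1
  refine Finset.prod_congr rfl fun i hi => ?_
  rw [Function.update_of_ne (Finset.ne_of_mem_erase hi)]

theorem integrable_eval_stdGauss (k : ι) : Integrable (fun x : ι → ℝ => x k) (stdGauss ι) :=
  integrable_comp_eval (μ := fun _ : ι => gaussianReal 0 1) (i := k) (f := fun x : ℝ => x)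
    ((memLp_id_gaussianReal 1).integrable (by simp))

/-- **Gaussian integration by parts** in one coordinate. -/
theorem integral_eval_mul_stdGauss [DecidableEq ι] (k : ι) {f f' : (ι → ℝ) → ℝ} {C : ℝ}
    (hfm : Measurable f) (hf'm : Measurable f')
    (hf : ∀ x, HasDerivAt (fun s => f (Function.update x k s)) (f' x) (x k))
    (hfC : ∀ x, |f x| ≤ C) (hf'C : ∀ x, |f' x| ≤ C) :
    ∫ x, x k * f x ∂(stdGauss ι) = ∫ x, f' x ∂(stdGauss ι) := by
  have hmp := measurePreserving_update_stdGauss k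
  have h1 : Integrable (fun x => x k * f x) (stdGauss ι) :=
    (integrable_eval_stdGauss k).mul_bdd (c := C) hfm.aestronglyMeasurable (.of_forall hfC)
  have h2 : Integrable f' (stdGauss ι) :=
    Integrable.of_bound hf'm.aestronglyMeasurable C (.of_forall hf'C)
  have key : ∀ {g : (ι → ℝ) → ℝ}, Integrable g (stdGauss ι) → ∫ x, g x ∂(stdGauss ι) =
      ∫ x, ∫ s, g (Function.update x k s) ∂(gaussianReal 0 1) ∂(stdGauss ι) := by
    intro g hg
    have hi := hmp.integrable_comp_of_integrable hg
    rw [← integral_prod (fun p : (ι → ℝ) × ℝ => g (Function.update p.1 k p.2)) hi]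
    conv_lhs => rw [← hmp.map_eq]
    refine integral_map hmp.measurable.aemeasurable ?_
    rw [hmp.map_eq]; exact hg.aestronglyMeasurable
  rw [key h1, key h2]
  congr 1; ext x
  simp only [Function.update_self]
  refine integral_mul_gaussianReal_std (C := C) (fun s => ?_) (fun s => hfC _) (fun s => hf'C _)
  simpa using hf (Function.update x k s)

end StandardGaussian

section LogSumExp

variable {I : Type*} [Fintype I]

/-- The log-sum-exp function. -/
def lse (z : I → ℝ) : ℝ := Real.log (∑ i, Real.exp (z i))

/-- The Gibbs weights, that is, the gradient of `lse`. -/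
def gibbs (z : I → ℝ) (i : I) : ℝ := Real.exp (z i) / ∑ j, Real.exp (z j)

theorem gibbs_nonneg (z : I → ℝ) (i : I) : 0 ≤ gibbs z i := by
  unfold gibbs; positivity

theorem sum_exp_pos [Nonempty I] (z : I → ℝ) : 0 < ∑ i, Real.exp (z i) :=
  Finset.sum_pos (fun _ _ => Real.exp_pos _) Finset.univ_nonempty

theorem sum_gibbs [Nonempty I] (z : I → ℝ) : ∑ i, gibbs z i = 1 := by
  unfold gibbs
  rw [← Finset.sum_div, div_self (sum_exp_pos z).ne']

theorem gibbs_le_one [Nonempty I] (z : I → ℝ) (i : I) : gibbs z i ≤ 1 := by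
  rw [← sum_gibbs z]
  exact Finset.single_le_sum (fun j _ => gibbs_nonneg z j) (Finset.mem_univ i)

theorem abs_gibbs_le_one [Nonempty I] (z : I → ℝ) (i : I) : |gibbs z i| ≤ 1 := by
  rw [abs_of_nonneg (gibbs_nonneg z i)]; exact gibbs_le_one z i

theorem le_lse (z : I → ℝ) (i : I) : z i ≤ lse z := by
  rw [lse, Real.le_log_iff_exp_le (Finset.sum_pos (fun _ _ => Real.exp_pos _)
    ⟨i, Finset.mem_univ i⟩)]
  exact Finset.single_le_sum (f := fun j => Real.exp (z j)) (fun j _ => (Real.exp_pos _).le)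
    (Finset.mem_univ i)

theorem lse_le [Nonempty I] {z : I → ℝ} {c : ℝ} (h : ∀ i, z i ≤ c) :
    lse z ≤ c + Real.log (Fintype.card I) := by
  rw [lse, Real.log_le_iff_le_exp (sum_exp_pos z), Real.exp_add,
    Real.exp_log (by exact_mod_cast Fintype.card_pos)]
  calc ∑ i, Real.exp (z i) ≤ ∑ _i : I, Real.exp c :=
        Finset.sum_le_sum fun i _ => Real.exp_le_exp.2 (h i)
    _ = Real.exp c * Fintype.card I := by simp [mul_comm]

theorem abs_lse_le [Nonempty I] (z : I → ℝ) :
    |lse z| ≤ ∑ i, |z i| + Real.log (Fintype.card I) := by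
  have hz : ∀ i, |z i| ≤ ∑ i, |z i| := fun i =>
    Finset.single_le_sum (f := fun j => |z j|) (fun j _ => abs_nonneg _) (Finset.mem_univ i)
  have hl : 0 ≤ Real.log (Fintype.card I) :=
    Real.log_nonneg (by exact_mod_cast Fintype.card_pos (α := I))
  refine abs_le.2 ⟨?_, lse_le fun i => (le_abs_self _).trans (hz i)⟩
  obtain ⟨i⟩ := ‹Nonempty I›
  linarith [le_lse z i, neg_abs_le (z i), hz i]

theorem measurable_lse : Measurable (lse : (I → ℝ) → ℝ) := by
  unfold lse; fun_prop

theorem measurable_gibbs (i : I) : Measurable fun z : I → ℝ => gibbs z i := by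
  unfold gibbs; fun_prop

theorem hasDerivAt_lse [Nonempty I] {z : ℝ → I → ℝ} {z' : I → ℝ} {t : ℝ}
    (h : ∀ i, HasDerivAt (fun s => z s i) (z' i) t) :
    HasDerivAt (fun s => lse (z s)) (∑ i, gibbs (z t) i * z' i) t := by
  have := (HasDerivAt.fun_sum fun i (_ : i ∈ Finset.univ) => (h i).exp).log (sum_exp_pos (z t)).ne'
  refine this.congr_deriv ?_
  simp only [gibbs, Finset.sum_div]
  exact Finset.sum_congr rfl fun i _ => by ring

theorem hasDerivAt_gibbs [Nonempty I] {z : ℝ → I → ℝ} {z' : I → ℝ} {t : ℝ}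
    (h : ∀ i, HasDerivAt (fun s => z s i) (z' i) t) (i : I) :
    HasDerivAt (fun s => gibbs (z s) i)
      (gibbs (z t) i * (z' i - ∑ j, gibbs (z t) j * z' j)) t := by
  have hS := (sum_exp_pos (z t)).ne'
  have := (h i).exp.fun_div (HasDerivAt.fun_sum fun i (_ : i ∈ Finset.univ) => (h i).exp) hS
  refine this.congr_deriv ?_
  have : ∑ j, gibbs (z t) j * z' j = (∑ j, Real.exp (z t j) * z' j) / ∑ j, Real.exp (z t j) := by
    simp only [gibbs, Finset.sum_div]
    exact Finset.sum_congr rfl fun i _ => by ring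
  rw [this, gibbs]
  field_simp

/-- A Gibbs average of the matrix `⟪d i, c j⟫` against the Hessian of `lse` is nonnegative as soon
as the squared increments of `c` do not decrease in direction `d`. -/
theorem gibbs_hessian_nonneg [Nonempty I] {K : Type*} [Fintype K] (z : I → ℝ) (c d : I → K → ℝ)
    (h : ∀ i j, 0 ≤ ∑ k, (d i k - d j k) * (c i k - c j k)) :
    0 ≤ ∑ i, ∑ k, d i k * (gibbs z i * (c i k - ∑ j, gibbs z j * c j k)) := by
  set p := gibbs z
  have h1 : ∀ i, ∑ k, d i k * (p i * (c i k - ∑ j, p j * c j k)) =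
      ∑ j, p i * p j * ∑ k, d i k * (c i k - c j k) := by
    intro i
    simp only [Finset.mul_sum]
    rw [Finset.sum_comm]
    refine Finset.sum_congr rfl fun k _ => ?_
    have : c i k = ∑ j, p j * c i k := by rw [← Finset.sum_mul, sum_gibbs, one_mul]
    rw [this, ← Finset.sum_sub_distrib, Finset.mul_sum, Finset.mul_sum]
    refine Finset.sum_congr rfl fun j _ => ?_
    rw [← this]; ring
  have h2 : ∑ i, ∑ j, p i * p j * ∑ k, d i k * (c i k - c j k) =
      ∑ i, ∑ j, p i * p j * ∑ k, d j k * (c j k - c i k) := by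
    rw [Finset.sum_comm]
    exact Finset.sum_congr rfl fun i _ => Finset.sum_congr rfl fun j _ => by ring
  have h3 : 0 ≤ ∑ i, ∑ j, p i * p j * ∑ k, (d i k - d j k) * (c i k - c j k) :=
    Finset.sum_nonneg fun i _ => Finset.sum_nonneg fun j _ =>
      mul_nonneg (mul_nonneg (gibbs_nonneg z i) (gibbs_nonneg z j)) (h i j)
  have h4 : ∑ i, ∑ j, p i * p j * ∑ k, (d i k - d j k) * (c i k - c j k) =
      ∑ i, ∑ j, p i * p j * ∑ k, d i k * (c i k - c j k) +
      ∑ i, ∑ j, p i * p j * ∑ k, d j k * (c j k - c i k) := by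
    simp only [← Finset.sum_add_distrib, ← mul_add]
    refine Finset.sum_congr rfl fun i _ => Finset.sum_congr rfl fun j _ => ?_
    congr 1
    exact Finset.sum_congr rfl fun k _ => by ring
  simp only [h1]
  linarith

end LogSumExp

section SudakovFernique

variable {I K : Type*} [Fintype K]

/-- The linear process `i ↦ ⟪c i, g⟫`. -/
def linProc (c : I → K → ℝ) (g : K → ℝ) (i : I) : ℝ := ∑ k, c i k * g k

theorem measurable_linProc (c : I → K → ℝ) : Measurable (linProc c) := by
  unfold linProc; fun_prop

theorem abs_linProc_le (c : I → K → ℝ) {M : I → K → ℝ} (hM : ∀ i k, |c i k| ≤ M i k)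
    (g : K → ℝ) (i : I) : |linProc c g i| ≤ ∑ k, M i k * |g k| := by
  refine (Finset.abs_sum_le_sum_abs _ _).trans (Finset.sum_le_sum fun k _ => ?_)
  rw [abs_mul]
  exact mul_le_mul_of_nonneg_right (hM i k) (abs_nonneg _)

variable [Fintype I]

theorem integrable_sum_mul_abs_eval (M : I → K → ℝ) :
    Integrable (fun g : K → ℝ => ∑ i, ∑ k, M i k * |g k|) (stdGauss K) :=
  integrable_finsetSum _ fun _ _ => integrable_finsetSum _ fun k _ =>
    ((integrable_eval_stdGauss k).abs.const_mul _)

theorem integrable_lse_linProc [Nonempty I] (c : I → K → ℝ) :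
    Integrable (fun g => lse (linProc c g)) (stdGauss K) := by
  refine Integrable.mono' ((integrable_sum_mul_abs_eval fun i k => |c i k|).add
    (integrable_const (Real.log (Fintype.card I))))
    (measurable_lse.comp (measurable_linProc c)).aestronglyMeasurable (.of_forall fun g => ?_)
  refine (abs_lse_le _).trans (add_le_add ?_ le_rfl)
  exact Finset.sum_le_sum fun i _ => abs_linProc_le c (fun _ _ => le_rfl) g i

theorem integral_eval_mul_gibbs [Nonempty I] (c : I → K → ℝ) (i : I) (k : K) :
    ∫ g, g k * gibbs (linProc c g) i ∂(stdGauss K) = ∫ g, gibbs (linProc c g) i *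
      (c i k - ∑ j, gibbs (linProc c g) j * c j k) ∂(stdGauss K) := by
  classical
  have hp : ∀ j, Measurable fun g => gibbs (linProc c g) j := fun j =>
    (measurable_gibbs j).comp (measurable_linProc c)
  refine integral_eval_mul_stdGauss (C := 1 + (|c i k| + ∑ j, |c j k|)) k (hp i)
    ((hp i).mul (measurable_const.sub (Finset.measurable_fun_sum _ fun j _ => (hp j).mul_const _)))
    (fun x => ?_) (fun x => ?_) (fun x => ?_)
  · have hz : ∀ j, HasDerivAt (fun s => linProc c (Function.update x k s) j) (c j k) (x k) := by
      intro j
      have : (fun s => linProc c (Function.update x k s) j) =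
          fun s => c j k * s + ∑ l ∈ Finset.univ.erase k, c j l * x l := by
        ext s
        rw [linProc, ← Finset.add_sum_erase _ _ (Finset.mem_univ k), Function.update_self]
        congr 1
        refine Finset.sum_congr rfl fun l hl => ?_
        rw [Function.update_of_ne (Finset.ne_of_mem_erase hl)]
      rw [this]
      simpa using ((hasDerivAt_id (x k)).const_mul (c j k)).add_const
        (∑ l ∈ Finset.univ.erase k, c j l * x l)
    simpa using hasDerivAt_gibbs hz i
  · have := abs_gibbs_le_one (linProc c x) i
    have : 0 ≤ |c i k| + ∑ j, |c j k| := by positivity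
    linarith
  · rw [abs_mul]
    have h1 : |c i k - ∑ j, gibbs (linProc c x) j * c j k| ≤ |c i k| + ∑ j, |c j k| := by
      refine (abs_sub _ _).trans (add_le_add le_rfl ?_)
      refine (Finset.abs_sum_le_sum_abs _ _).trans (Finset.sum_le_sum fun j _ => ?_)
      rw [abs_mul]
      exact mul_le_of_le_one_left (abs_nonneg _) (abs_gibbs_le_one _ j)
    have := mul_le_of_le_one_left (abs_nonneg (c i k - ∑ j, gibbs (linProc c x) j * c j k))
      (abs_gibbs_le_one (linProc c x) i)
    linarith

theorem integral_gibbs_linProc_nonneg [Nonempty I] (c d : I → K → ℝ)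
    (h : ∀ i j, 0 ≤ ∑ k, (d i k - d j k) * (c i k - c j k)) :
    0 ≤ ∫ g, ∑ i, gibbs (linProc c g) i * linProc d g i ∂(stdGauss K) := by
  have hp : ∀ j, Measurable fun g => gibbs (linProc c g) j := fun j =>
    (measurable_gibbs j).comp (measurable_linProc c)
  have hi : ∀ i k, Integrable (fun g => g k * gibbs (linProc c g) i) (stdGauss K) := fun i k =>
    (integrable_eval_stdGauss k).mul_bdd (c := 1) (hp i).aestronglyMeasurable
      (.of_forall fun g => abs_gibbs_le_one _ i)
  have hi' : ∀ i k, Integrable (fun g => gibbs (linProc c g) i *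
      (c i k - ∑ j, gibbs (linProc c g) j * c j k)) (stdGauss K) := fun i k =>
    Integrable.bdd_mul (c := 1) ((integrable_const _).sub (integrable_finsetSum _ fun j _ =>
      (Integrable.of_bound (hp j).aestronglyMeasurable 1
        (.of_forall fun g => abs_gibbs_le_one _ j)).mul_const _)) (hp i).aestronglyMeasurable
      (.of_forall fun g => abs_gibbs_le_one _ i)
  have : ∫ g, ∑ i, gibbs (linProc c g) i * linProc d g i ∂(stdGauss K) =
      ∫ g, ∑ i, ∑ k, d i k * (gibbs (linProc c g) i *
        (c i k - ∑ j, gibbs (linProc c g) j * c j k)) ∂(stdGauss K) := by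
    calc _ = ∫ g, ∑ i, ∑ k, d i k * (g k * gibbs (linProc c g) i) ∂(stdGauss K) := by
          congr 1; ext g
          refine Finset.sum_congr rfl fun i _ => ?_
          rw [linProc, Finset.mul_sum]
          exact Finset.sum_congr rfl fun k _ => by ring
      _ = ∑ i, ∑ k, d i k * ∫ g, g k * gibbs (linProc c g) i ∂(stdGauss K) := by
          rw [integral_finsetSum _ fun i _ => integrable_finsetSum _ fun k _ =>
            (hi i k).const_mul _]
          refine Finset.sum_congr rfl fun i _ => ?_
          rw [integral_finsetSum _ fun k _ => (hi i k).const_mul _]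
          exact Finset.sum_congr rfl fun k _ => integral_const_mul _ _
      _ = ∑ i, ∑ k, d i k * ∫ g, gibbs (linProc c g) i *
            (c i k - ∑ j, gibbs (linProc c g) j * c j k) ∂(stdGauss K) := by
          simp only [integral_eval_mul_gibbs]
      _ = _ := by
          rw [integral_finsetSum _ fun i _ => integrable_finsetSum _ fun k _ =>
            (hi' i k).const_mul _]
          refine Finset.sum_congr rfl fun i _ => ?_
          rw [integral_finsetSum _ fun k _ => (hi' i k).const_mul _]
          exact Finset.sum_congr rfl fun k _ => (integral_const_mul _ _).symm
  rw [this]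
  exact integral_nonneg fun g => gibbs_hessian_nonneg _ c d h

/-- **Sudakov–Fernique comparison** for log-sum-exp of two linear Gaussian processes that are
independent, expressed by orthogonality of their coefficient vectors. -/
theorem integral_lse_linProc_mono [Nonempty I] (a b : I → K → ℝ)
    (horth : ∀ i j k, a i k * b j k = 0)
    (hab : ∀ i j, ∑ k, (a i k - a j k) ^ 2 ≤ ∑ k, (b i k - b j k) ^ 2) :
    ∫ g, lse (linProc a g) ∂(stdGauss K) ≤ ∫ g, lse (linProc b g) ∂(stdGauss K) := by
  set c : ℝ → I → K → ℝ := fun t i k => Real.cos t * a i k + Real.sin t * b i k with hc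
  set d : ℝ → I → K → ℝ := fun t i k => -Real.sin t * a i k + Real.cos t * b i k with hd
  have hdM : ∀ t i k, |d t i k| ≤ |a i k| + |b i k| := by
    intro t i k
    refine (abs_add_le _ _).trans ?_
    rw [abs_mul, abs_mul, abs_neg]
    exact add_le_add (mul_le_of_le_one_left (abs_nonneg _) (Real.abs_sin_le_one t))
      (mul_le_of_le_one_left (abs_nonneg _) (Real.abs_cos_le_one t))
  have hder : ∀ t, HasDerivAt (fun t => ∫ g, lse (linProc (c t) g) ∂(stdGauss K))
      (∫ g, ∑ i, gibbs (linProc (c t) g) i * linProc (d t) g i ∂(stdGauss K)) t := by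
    intro t
    refine (hasDerivAt_integral_of_dominated_loc_of_deriv_le (𝕜 := ℝ) (s := Set.univ)
      (F := fun t g => lse (linProc (c t) g))
      (F' := fun t g => ∑ i, gibbs (linProc (c t) g) i * linProc (d t) g i)
      (bound := fun g => ∑ i, ∑ k, (|a i k| + |b i k|) * |g k|) Filter.univ_mem
      (.of_forall fun s => (integrable_lse_linProc (c s)).aestronglyMeasurable)
      (integrable_lse_linProc (c t)) ?_ (.of_forall fun g s _ => ?_)
      (integrable_sum_mul_abs_eval _) (.of_forall fun g s _ => ?_)).2
    · refine (Finset.measurable_fun_sum _ fun i _ => ?_).aestronglyMeasurable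
      exact ((measurable_gibbs i).comp (measurable_linProc _)).mul
        ((measurable_pi_apply i).comp (measurable_linProc _))
    · rw [Real.norm_eq_abs]
      refine (Finset.abs_sum_le_sum_abs _ _).trans (Finset.sum_le_sum fun i _ => ?_)
      rw [abs_mul]
      exact (mul_le_of_le_one_left (abs_nonneg _) (abs_gibbs_le_one _ i)).trans
        (abs_linProc_le _ (hdM s) g i)
    · refine hasDerivAt_lse fun i => ?_
      refine HasDerivAt.fun_sum fun k _ => HasDerivAt.mul_const ?_ _
      exact ((Real.hasDerivAt_cos s).mul_const _).add ((Real.hasDerivAt_sin s).mul_const _)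
  have hmono : MonotoneOn (fun t => ∫ g, lse (linProc (c t) g) ∂(stdGauss K))
      (Set.Icc 0 (Real.pi / 2)) := by
    refine monotoneOn_of_deriv_nonneg (convex_Icc _ _)
      (fun t _ => (hder t).continuousAt.continuousWithinAt)
      (fun t _ => (hder t).differentiableAt.differentiableWithinAt) fun t ht => ?_
    rw [interior_Icc] at ht
    rw [(hder t).deriv]
    refine integral_gibbs_linProc_nonneg _ _ fun i j => ?_
    have : ∀ k, (d t i k - d t j k) * (c t i k - c t j k) = Real.sin t * Real.cos t *
        ((b i k - b j k) ^ 2 - (a i k - a j k) ^ 2) := by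
      intro k
      simp only [hc, hd]
      linear_combination (Real.cos t ^ 2 - Real.sin t ^ 2) *
        (horth i i k - horth i j k - horth j i k + horth j j k)
    simp only [this, ← Finset.mul_sum, Finset.sum_sub_distrib]
    refine mul_nonneg (mul_nonneg ?_ ?_) (sub_nonneg.2 (hab i j))
    · exact Real.sin_nonneg_of_nonneg_of_le_pi ht.1.le (by linarith [ht.2, Real.pi_pos])
    · exact Real.cos_nonneg_of_neg_pi_div_two_le_of_le (by linarith [ht.1, Real.pi_pos]) ht.2.le
  have hpi := Real.pi_pos
  have := hmono (Set.left_mem_Icc.2 (by positivity)) (Set.right_mem_Icc.2 (by positivity))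
    (by positivity)
  simpa [hc] using this

end SudakovFernique

section Chevet

variable {κ ι : Type*} [Fintype κ] [Fintype ι]

theorem measurePreserving_comp_inl_stdGauss :
    MeasurePreserving (fun (x : κ ⊕ ι → ℝ) k => x (Sum.inl k)) (stdGauss (κ ⊕ ι)) (stdGauss κ) :=
  measurePreserving_fst.comp
    (measurePreserving_sumPiEquivProdPi (X := fun _ : κ ⊕ ι => ℝ) fun _ => gaussianReal 0 1)

theorem measurePreserving_comp_inr_stdGauss :
    MeasurePreserving (fun (x : κ ⊕ ι → ℝ) k => x (Sum.inr k)) (stdGauss (κ ⊕ ι)) (stdGauss ι) :=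
  measurePreserving_snd.comp
    (measurePreserving_sumPiEquivProdPi (X := fun _ : κ ⊕ ι => ℝ) fun _ => gaussianReal 0 1)

theorem integral_comp_of_measurePreserving {α β : Type*} [MeasurableSpace α] [MeasurableSpace β]
    {μ : Measure α} {ν : Measure β} {e : α → β} (he : MeasurePreserving e μ ν) {f : β → ℝ}
    (hf : AEStronglyMeasurable f ν) : ∫ x, f (e x) ∂μ = ∫ y, f y ∂ν := by
  rw [← he.map_eq, integral_map he.measurable.aemeasurable (he.map_eq ▸ hf)]

theorem integrable_sq_eval_stdGauss (k : ι) :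
    Integrable (fun x : ι → ℝ => x k ^ 2) (stdGauss ι) :=
  integrable_comp_eval (μ := fun _ : ι => gaussianReal 0 1) (i := k) (f := fun x : ℝ => x ^ 2)
    (memLp_id_gaussianReal 2).integrable_sq

theorem integral_sq_eval_stdGauss (k : ι) : ∫ x : ι → ℝ, x k ^ 2 ∂(stdGauss ι) = 1 := by
  rw [integral_comp_eval (μ := fun _ : ι => gaussianReal 0 1) (i := k) (f := fun x : ℝ => x ^ 2)
    (by fun_prop)]
  have h := variance_fun_id_gaussianReal (μ := 0) (v := 1)
  rw [variance_eq_integral (by fun_prop)] at h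
  simpa using h

theorem integrable_sqrt_sum_sq_stdGauss :
    Integrable (fun x : ι → ℝ => √(∑ k, x k ^ 2)) (stdGauss ι) := by
  refine Integrable.mono' ((integrable_const 1).add (integrable_finsetSum Finset.univ
    fun k _ => integrable_sq_eval_stdGauss k))
    (Measurable.aestronglyMeasurable (by fun_prop)) (.of_forall fun x => ?_)
  have h0 : 0 ≤ ∑ k, x k ^ 2 := by positivity
  simp only [Real.norm_eq_abs, abs_of_nonneg (Real.sqrt_nonneg _), Pi.add_apply]
  nlinarith [Real.sq_sqrt h0, sq_nonneg (√(∑ k, x k ^ 2) - 1), Real.sqrt_nonneg (∑ k, x k ^ 2)]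

theorem integral_sqrt_sum_sq_stdGauss_le [Nonempty ι] :
    ∫ x : ι → ℝ, √(∑ k, x k ^ 2) ∂(stdGauss ι) ≤ √(Fintype.card ι) := by
  set s := √(Fintype.card ι) with hs
  have hs0 : 0 < s := Real.sqrt_pos.2 (by exact_mod_cast Fintype.card_pos)
  have hs2 : s ^ 2 = Fintype.card ι := Real.sq_sqrt (by positivity)
  have hQ : Integrable (fun x : ι → ℝ => ∑ k, x k ^ 2) (stdGauss ι) :=
    integrable_finsetSum Finset.univ fun k _ => integrable_sq_eval_stdGauss k
  calc ∫ x : ι → ℝ, √(∑ k, x k ^ 2) ∂(stdGauss ι)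
      ≤ ∫ x : ι → ℝ, ((2 * s)⁻¹ * (∑ k, x k ^ 2) + s / 2) ∂(stdGauss ι) := by
        refine integral_mono integrable_sqrt_sum_sq_stdGauss
          ((hQ.const_mul _).add (integrable_const _)) fun x => ?_
        have h0 : 0 ≤ ∑ k, x k ^ 2 := by positivity
        have h1 := Real.sq_sqrt h0
        set q := √(∑ k, x k ^ 2)
        simp only [← h1]
        have : (2 * s)⁻¹ * q ^ 2 + s / 2 - q = (2 * s)⁻¹ * (q - s) ^ 2 := by field_simp; ring
        have : 0 ≤ (2 * s)⁻¹ * (q - s) ^ 2 := by positivity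
        linarith
    _ = s := by
        rw [integral_add (hQ.const_mul _) (integrable_const _), integral_const_mul,
          integral_finsetSum _ fun k _ => integrable_sq_eval_stdGauss k]
        simp only [integral_sq_eval_stdGauss]
        simp only [Finset.sum_const, Finset.card_univ, nsmul_eq_mul, mul_one, ← hs2,
          integral_const, probReal_univ, one_smul]
        field_simp; ring

theorem abs_le_one_of_sum_sq {v : ι → ℝ} (hv : ∑ k, v k ^ 2 = 1) (k : ι) : |v k| ≤ 1 := by
  rw [← sq_le_one_iff_abs_le_one, ← hv]
  exact Finset.single_le_sum (f := fun k => v k ^ 2) (fun _ _ => sq_nonneg _) (Finset.mem_univ k)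

theorem sum_mul_le_one_of_sum_sq {v w : ι → ℝ} (hv : ∑ k, v k ^ 2 = 1) (hw : ∑ k, w k ^ 2 = 1) :
    ∑ k, v k * w k ≤ 1 := by
  have := Finset.sum_mul_sq_le_sq_mul_sq Finset.univ v w
  rw [hv, hw, one_mul] at this
  exact (abs_le.1 ((sq_le_one_iff_abs_le_one _).1 this)).2

theorem sum_sub_sq_of_sum_sq {v w : ι → ℝ} (hv : ∑ k, v k ^ 2 = 1) (hw : ∑ k, w k ^ 2 = 1) :
    ∑ k, (v k - w k) ^ 2 = 2 - 2 * ∑ k, v k * w k := by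
  have : ∀ k, (v k - w k) ^ 2 = v k ^ 2 + w k ^ 2 - 2 * (v k * w k) := fun k => by ring
  simp only [this, Finset.sum_sub_distrib, Finset.sum_add_distrib, ← Finset.mul_sum, hv, hw]
  ring

/-- Finite form of **Chevet's inequality**, for log-sum-exp at inverse temperature `β`. -/
theorem integral_lse_bilin_le {I : Type*} [Fintype I] [Nonempty I] (u : I → κ → ℝ)
    (v : I → ι → ℝ) (hu : ∀ i, ∑ k, u i k ^ 2 = 1) (hv : ∀ i, ∑ l, v i l ^ 2 = 1) (β : ℝ) :
    ∫ A : κ × ι → ℝ, lse (linProc (fun i p => β * (u i p.1 * v i p.2)) A) ∂(stdGauss (κ × ι)) ≤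
      ∫ x : κ ⊕ ι → ℝ, lse (linProc
        (fun i => Sum.elim (fun k => β * u i k) (fun l => β * v i l)) x) ∂(stdGauss (κ ⊕ ι)) := by
  have h := integral_lse_linProc_mono (K := (κ × ι) ⊕ (κ ⊕ ι))
    (fun i => Sum.elim (fun p => β * (u i p.1 * v i p.2)) (fun _ => 0))
    (fun i => Sum.elim (fun _ => 0) (Sum.elim (fun k => β * u i k) (fun l => β * v i l)))
    (by rintro i j (k | k) <;> simp) (fun i j => ?_)
  · rw [← integral_comp_of_measurePreserving
        (measurePreserving_comp_inl_stdGauss (κ := κ × ι) (ι := κ ⊕ ι))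
        (integrable_lse_linProc _).aestronglyMeasurable,
      ← integral_comp_of_measurePreserving
        (measurePreserving_comp_inr_stdGauss (κ := κ × ι) (ι := κ ⊕ ι))
        (integrable_lse_linProc _).aestronglyMeasurable]
    convert h using 5 with x x
    · ext i; simp [linProc]
    · ext i; simp [linProc]
  · have huv : ∀ i, ∑ p : κ × ι, (u i p.1 * v i p.2) ^ 2 = 1 := fun i => by
      simp only [mul_pow, Fintype.sum_prod_type, ← Finset.mul_sum, hv, mul_one, hu]
    have hin : ∑ p : κ × ι, u i p.1 * v i p.2 * (u j p.1 * v j p.2) =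
        (∑ k, u i k * u j k) * ∑ l, v i l * v j l := by
      rw [Fintype.sum_prod_type, Finset.sum_mul_sum]
      exact Finset.sum_congr rfl fun k _ => Finset.sum_congr rfl fun l _ => by ring
    simp only [Fintype.sum_sum_type, Sum.elim_inl, Sum.elim_inr, sub_self, ← mul_sub, mul_pow,
      ← Finset.mul_sum, ne_eq, OfNat.ofNat_ne_zero, not_false_eq_true, zero_pow,
      Finset.sum_const_zero, add_zero, zero_add]
    have e := sum_sub_sq_of_sum_sq (huv i) (huv j)
    rw [← mul_add, e, sum_sub_sq_of_sum_sq (hu i) (hu j), sum_sub_sq_of_sum_sq (hv i) (hv j), hin]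
    refine mul_le_mul_of_nonneg_left ?_ (sq_nonneg β)
    nlinarith [mul_nonneg (sub_nonneg.2 (sum_mul_le_one_of_sum_sq (hu i) (hu j)))
      (sub_nonneg.2 (sum_mul_le_one_of_sum_sq (hv i) (hv j)))]

/-- **Chevet's inequality** for the Euclidean sphere and a set `T` of unit vectors: a function `f`
dominated by the supremum of `∑ A (k, l) u k v l` over unit vectors `u` and `v ∈ T` has mean at
most `√|κ|` plus the mean of any majorant `Ψ` of the support function of `T`. -/
theorem integral_le_of_chevet {T : Set (ι → ℝ)} (hT : ∀ v ∈ T, ∑ l, v l ^ 2 = 1)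
    (hTne : T.Nonempty) [Nonempty κ] {f : (κ × ι → ℝ) → ℝ} (hf : Integrable f (stdGauss (κ × ι)))
    {Ψ : (ι → ℝ) → ℝ} (hΨ : Integrable Ψ (stdGauss ι))
    (hfT : ∀ A c, (∀ u : κ → ℝ, ∑ k, u k ^ 2 = 1 → ∀ v ∈ T,
      ∑ p : κ × ι, u p.1 * v p.2 * A p ≤ c) → f A ≤ c)
    (hΨT : ∀ h, ∀ v ∈ T, ∑ l, v l * h l ≤ Ψ h) :
    ∫ A, f A ∂(stdGauss (κ × ι)) ≤ √(Fintype.card κ) + ∫ h, Ψ h ∂(stdGauss ι) := by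
  set S : Set ((κ → ℝ) × (ι → ℝ)) := {w | ∑ k, w.1 k ^ 2 = 1 ∧ w.2 ∈ T} with hS
  have hSne : S.Nonempty := by
    classical
    obtain ⟨v, hv⟩ := hTne
    obtain ⟨k⟩ := ‹Nonempty κ›
    exact ⟨(Pi.single k 1, v), by simp [Pi.single_apply], hv⟩
  have hSb : TotallyBounded S := by
    refine (isCompact_closedBall (0 : (κ → ℝ) × (ι → ℝ)) 1).totallyBounded.subset fun w hw => ?_
    rw [mem_closedBall_zero_iff, Prod.norm_def]
    exact max_le ((pi_norm_le_iff_of_nonneg zero_le_one).2 fun k => abs_le_one_of_sum_sq hw.1 k)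
      ((pi_norm_le_iff_of_nonneg zero_le_one).2 fun k => abs_le_one_of_sum_sq (hT _ hw.2) k)
  set N : (κ × ι → ℝ) → ℝ := fun A => ∑ p, |A p| with hN
  have hNi : Integrable N (stdGauss (κ × ι)) :=
    integrable_finsetSum _ fun p _ => (integrable_eval_stdGauss p).abs
  set C := ∫ A, N A ∂(stdGauss (κ × ι)) with hC
  have hC0 : 0 ≤ C := integral_nonneg fun A => by positivity
  set R := √(Fintype.card κ) + ∫ h, Ψ h ∂(stdGauss ι) with hR
  have main : ∀ ε > 0, ∫ A, f A ∂(stdGauss (κ × ι)) ≤ R + (1 + 2 * C) * ε := by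
    intro ε hε
    obtain ⟨t, htS, htf, hcov⟩ := Metric.finite_approx_of_totallyBounded hSb ε hε
    have := htf.fintype
    have : Nonempty t := by
      obtain ⟨w, hw⟩ := hSne
      obtain ⟨y, hy, -⟩ := Set.mem_iUnion₂.1 (hcov hw)
      exact ⟨⟨y, hy⟩⟩
    have hcard : 0 ≤ Real.log (Fintype.card t) :=
      Real.log_nonneg (by exact_mod_cast Fintype.card_pos (α := t))
    set β := (Real.log (Fintype.card t) + 1) / ε with hβ
    have hβ0 : 0 < β := by positivity
    have hlog : β⁻¹ * Real.log (Fintype.card t) ≤ ε := by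
      rw [hβ, inv_div, div_mul_eq_mul_div, div_le_iff₀ (by positivity)]
      nlinarith
    have hch := integral_lse_bilin_le (fun i : t => i.1.1) (fun i : t => i.1.2)
      (fun i => (htS i.2).1) (fun i => hT _ (htS i.2).2) β
    set X : (κ × ι → ℝ) → ℝ := fun A =>
      lse (linProc (fun (i : t) (p : κ × ι) => β * (i.1.1 p.1 * i.1.2 p.2)) A) with hX
    set Y : (κ ⊕ ι → ℝ) → ℝ := fun x => lse (linProc (fun (i : t) =>
      Sum.elim (fun k => β * i.1.1 k) (fun l => β * i.1.2 l)) x) with hY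
    have hXi : Integrable X (stdGauss (κ × ι)) := integrable_lse_linProc _
    have hYi : Integrable Y (stdGauss (κ ⊕ ι)) := integrable_lse_linProc _
    have hfX : ∀ A, f A ≤ β⁻¹ * X A + 2 * ε * N A := by
      intro A
      refine hfT A _ fun u hu v hv => ?_
      obtain ⟨y, hy, hyd⟩ := Set.mem_iUnion₂.1 (hcov (show (u, v) ∈ S from ⟨hu, hv⟩))
      rw [Metric.mem_ball, dist_eq_norm] at hyd
      have hdu : ∀ k, |u k - y.1 k| ≤ ε := fun k =>
        ((norm_le_pi_norm (u - y.1) k).trans (norm_fst_le ((u, v) - y))).trans hyd.le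
      have hdv : ∀ l, |v l - y.2 l| ≤ ε := fun l =>
        ((norm_le_pi_norm (v - y.2) l).trans (norm_snd_le ((u, v) - y))).trans hyd.le
      have h1 : β * ∑ p : κ × ι, y.1 p.1 * y.2 p.2 * A p ≤ X A := by
        refine le_trans (le_of_eq ?_) (le_lse _ (⟨y, hy⟩ : t))
        simp only [linProc, Finset.mul_sum]
        exact Finset.sum_congr rfl fun p _ => by ring
      have h2 : ∑ p : κ × ι, y.1 p.1 * y.2 p.2 * A p ≤ β⁻¹ * X A := by
        rw [inv_mul_eq_div, le_div_iff₀ hβ0]; linarith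
      have h3 : ∑ p : κ × ι, u p.1 * v p.2 * A p - ∑ p : κ × ι, y.1 p.1 * y.2 p.2 * A p ≤
          2 * ε * N A := by
        rw [← Finset.sum_sub_distrib, hN, Finset.mul_sum]
        refine Finset.sum_le_sum fun p _ => ?_
        rw [← sub_mul]
        refine (le_abs_self _).trans ?_
        rw [abs_mul]
        refine mul_le_mul_of_nonneg_right ?_ (abs_nonneg _)
        have e : u p.1 * v p.2 - y.1 p.1 * y.2 p.2 =
          (u p.1 - y.1 p.1) * v p.2 + y.1 p.1 * (v p.2 - y.2 p.2) := by ring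
        rw [e]
        refine (abs_add_le _ _).trans ?_
        rw [abs_mul, abs_mul]
        have a1 := mul_le_mul (hdu p.1) (abs_le_one_of_sum_sq (hT v hv) p.2) (abs_nonneg _) hε.le
        have a2 := mul_le_mul (abs_le_one_of_sum_sq (htS hy).1 p.1) (hdv p.2) (abs_nonneg _)
          zero_le_one
        linarith
      linarith
    have hfst := measurePreserving_comp_inl_stdGauss (κ := κ) (ι := ι)
    have hsnd := measurePreserving_comp_inr_stdGauss (κ := κ) (ι := ι)
    have hgi : Integrable (fun x : κ ⊕ ι → ℝ => √(∑ k, x (Sum.inl k) ^ 2)) (stdGauss (κ ⊕ ι)) :=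
      hfst.integrable_comp_of_integrable integrable_sqrt_sum_sq_stdGauss
    have hhi : Integrable (fun x : κ ⊕ ι → ℝ => Ψ fun l => x (Sum.inr l)) (stdGauss (κ ⊕ ι)) :=
      hsnd.integrable_comp_of_integrable hΨ
    have hYle : ∀ x, β⁻¹ * Y x ≤ √(∑ k, x (Sum.inl k) ^ 2) + Ψ (fun l => x (Sum.inr l)) + ε := by
      intro x
      have h1 : Y x ≤ β * (√(∑ k, x (Sum.inl k) ^ 2) + Ψ (fun l => x (Sum.inr l))) +
          Real.log (Fintype.card t) := by
        refine lse_le fun i => ?_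
        have e : linProc (fun (i : t) => Sum.elim (fun k => β * i.1.1 k) (fun l => β * i.1.2 l)) x i
            = β * (∑ k, i.1.1 k * x (Sum.inl k) + ∑ l, i.1.2 l * x (Sum.inr l)) := by
          simp only [linProc, Fintype.sum_sum_type, Sum.elim_inl, Sum.elim_inr, mul_add,
            Finset.mul_sum, mul_assoc]
        rw [e]
        refine mul_le_mul_of_nonneg_left (add_le_add ?_ (hΨT _ _ (htS i.2).2)) hβ0.le
        have := Real.sum_mul_le_sqrt_mul_sqrt Finset.univ i.1.1 fun k => x (Sum.inl k)
        rwa [(htS i.2).1, Real.sqrt_one, one_mul] at this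
      have h2 := mul_le_mul_of_nonneg_left h1 (inv_nonneg.2 hβ0.le)
      rw [mul_add, inv_mul_cancel_left₀ hβ0.ne'] at h2
      linarith
    have hYint : β⁻¹ * ∫ x, Y x ∂(stdGauss (κ ⊕ ι)) ≤ R + ε := by
      rw [← integral_const_mul]
      refine (integral_mono (hYi.const_mul _) ((hgi.add hhi).add (integrable_const ε)) hYle).trans ?_
      simp only [Pi.add_apply]
      rw [integral_add (f := fun x : κ ⊕ ι → ℝ => √(∑ k, x (Sum.inl k) ^ 2) +
        Ψ fun l => x (Sum.inr l)) (hgi.add hhi) (integrable_const ε), integral_add hgi hhi]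
      simp only [integral_const, probReal_univ, one_smul]
      have e1 := integral_comp_of_measurePreserving hfst
        integrable_sqrt_sum_sq_stdGauss.aestronglyMeasurable
      have e2 := integral_comp_of_measurePreserving hsnd hΨ.aestronglyMeasurable
      have := integral_sqrt_sum_sq_stdGauss_le (ι := κ)
      rw [e1, e2]
      linarith
    have hXint : β⁻¹ * ∫ A, X A ∂(stdGauss (κ × ι)) ≤ R + ε :=
      (mul_le_mul_of_nonneg_left hch (inv_nonneg.2 hβ0.le)).trans hYint
    have hfint := integral_mono hf ((hXi.const_mul β⁻¹).add (hNi.const_mul (2 * ε))) hfX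
    simp only [Pi.add_apply] at hfint
    rw [integral_add (hXi.const_mul β⁻¹) (hNi.const_mul (2 * ε)), integral_const_mul,
      integral_const_mul] at hfint
    linarith
  refine le_of_forall_pos_le_add fun δ hδ => ?_
  have h := main (δ / (1 + 2 * C)) (by positivity)
  rwa [mul_div_cancel₀ _ (by positivity)] at h

end Chevet

section OperatorNorm

open scoped Matrix.Norms.L2Operator

variable {n₁ n₂ : ℕ}

/-- The `ℓ²` operator norm of the matrix with the given entries. -/
def entryOpNorm (h : Fin n₁ × Fin n₂ → ℝ) : ℝ :=
  ‖(Matrix.of fun i j => h (i, j) : Matrix (Fin n₁) (Fin n₂) ℝ)‖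

theorem entryOpNorm_nonneg (h : Fin n₁ × Fin n₂ → ℝ) : 0 ≤ entryOpNorm h := norm_nonneg _

theorem exists_unit_sum_mul_eq {ι : Type*} [Fintype ι] [Nonempty ι] (w : ι → ℝ) :
    ∃ u : ι → ℝ, ∑ k, u k ^ 2 = 1 ∧ ∑ k, u k * w k = √(∑ k, w k ^ 2) := by
  classical
  have h0 : 0 ≤ ∑ k, w k ^ 2 := by positivity
  rcases h0.eq_or_lt with h | h
  · have hw : ∀ k, w k = 0 := fun k => by
      simpa using (Finset.sum_eq_zero_iff_of_nonneg fun i _ => sq_nonneg (w i)).1 h.symm k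
        (Finset.mem_univ k)
    obtain ⟨k⟩ := ‹Nonempty ι›
    exact ⟨Pi.single k 1, by simp [Pi.single_apply], by simp [hw]⟩
  · have hs : 0 < √(∑ k, w k ^ 2) := Real.sqrt_pos.2 h
    refine ⟨fun k => w k / √(∑ k, w k ^ 2), ?_, ?_⟩
    · simp only [div_pow, ← Finset.sum_div, Real.sq_sqrt h0]
      exact div_self h.ne'
    · simp only [div_mul_eq_mul_div, ← Finset.sum_div, ← sq]
      rw [div_eq_iff hs.ne', Real.mul_self_sqrt h0]

theorem entryOpNorm_le [Nonempty (Fin n₁)] [Nonempty (Fin n₂)] {h : Fin n₁ × Fin n₂ → ℝ} {c : ℝ}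
    (hc : ∀ u : Fin n₁ → ℝ, ∑ k, u k ^ 2 = 1 → ∀ v : Fin n₂ → ℝ, ∑ l, v l ^ 2 = 1 →
      ∑ p : Fin n₁ × Fin n₂, u p.1 * v p.2 * h p ≤ c) : entryOpNorm h ≤ c := by
  have key : ∀ v : Fin n₂ → ℝ, ∑ l, v l ^ 2 = 1 →
      √(∑ i, (∑ j, h (i, j) * v j) ^ 2) ≤ c := by
    intro v hv
    obtain ⟨u, hu, hue⟩ := exists_unit_sum_mul_eq fun i => ∑ j, h (i, j) * v j
    rw [← hue]
    refine le_trans (le_of_eq ?_) (hc u hu v hv)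
    simp only [Fintype.sum_prod_type, Finset.mul_sum]
    exact Finset.sum_congr rfl fun k _ => Finset.sum_congr rfl fun l _ => by ring
  have hc0 : 0 ≤ c := by
    obtain ⟨v, hv, -⟩ := exists_unit_sum_mul_eq (0 : Fin n₂ → ℝ)
    exact (Real.sqrt_nonneg _).trans (key v hv)
  rw [entryOpNorm, Matrix.l2_opNorm_def]
  refine ContinuousLinearMap.opNorm_le_of_unit_norm hc0 fun x hx => ?_
  have hx2 : ∑ l, x l ^ 2 = 1 := by
    have := EuclideanSpace.real_norm_sq_eq x
    rw [hx] at this; simpa using this.symm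
  refine le_trans (le_of_eq ?_) (key _ hx2)
  rw [EuclideanSpace.norm_eq]
  simp [Matrix.toLpLin_apply, Matrix.mulVec, dotProduct]

theorem sqrt_sum_sq_vecMul_le (h : Fin n₁ × Fin n₂ → ℝ) (q : Fin n₁ → ℝ) :
    √(∑ j, (∑ i, h (i, j) * q i) ^ 2) ≤ entryOpNorm h * √(∑ i, q i ^ 2) := by
  have := Matrix.l2_opNorm_mulVec
    (Matrix.conjTranspose (Matrix.of fun i j => h (i, j) : Matrix (Fin n₁) (Fin n₂) ℝ))
    (WithLp.toLp 2 q)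
  rw [Matrix.l2_opNorm_conjTranspose] at this
  simpa [EuclideanSpace.norm_eq, Matrix.mulVec, dotProduct, entryOpNorm] using this

theorem integrable_entryOpNorm [Nonempty (Fin n₁)] [Nonempty (Fin n₂)] :
    Integrable (entryOpNorm (n₁ := n₁) (n₂ := n₂)) (stdGauss (Fin n₁ × Fin n₂)) := by
  have hcont : Continuous (entryOpNorm (n₁ := n₁) (n₂ := n₂)) := by
    let L : (Fin n₁ × Fin n₂ → ℝ) →ₗ[ℝ] Matrix (Fin n₁) (Fin n₂) ℝ :=
      { toFun := fun h => Matrix.of fun i j => h (i, j)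
        map_add' := fun _ _ => rfl
        map_smul' := fun _ _ => rfl }
    exact continuous_norm.comp L.continuous_of_finiteDimensional
  refine Integrable.mono' (integrable_finsetSum Finset.univ fun p _ =>
    (integrable_eval_stdGauss p).abs) hcont.aestronglyMeasurable (.of_forall fun h => ?_)
  rw [Real.norm_eq_abs, abs_of_nonneg (entryOpNorm_nonneg h)]
  refine entryOpNorm_le fun u hu v hv => Finset.sum_le_sum fun p _ => ?_
  refine (le_abs_self _).trans ?_
  rw [abs_mul, abs_mul]
  exact mul_le_of_le_one_left (abs_nonneg _)
    (mul_le_one₀ (abs_le_one_of_sum_sq hu _) (abs_nonneg _) (abs_le_one_of_sum_sq hv _))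

/-- The mean operator norm of a standard Gaussian matrix is at most `√n₁ + √n₂`. -/
theorem integral_entryOpNorm_le [Nonempty (Fin n₁)] [Nonempty (Fin n₂)] :
    ∫ h, entryOpNorm h ∂(stdGauss (Fin n₁ × Fin n₂)) ≤ √n₁ + √n₂ := by
  have hne : {v : Fin n₂ → ℝ | ∑ l, v l ^ 2 = 1}.Nonempty := by
    obtain ⟨v, hv, -⟩ := exists_unit_sum_mul_eq (0 : Fin n₂ → ℝ)
    exact ⟨v, hv⟩
  have h := integral_le_of_chevet (κ := Fin n₁) (T := {v : Fin n₂ → ℝ | ∑ l, v l ^ 2 = 1})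
    (fun v hv => hv) hne integrable_entryOpNorm integrable_sqrt_sum_sq_stdGauss
    (fun A c hc => entryOpNorm_le hc) fun h v hv => by
      have := Real.sum_mul_le_sqrt_mul_sqrt Finset.univ v h
      rwa [hv, Real.sqrt_one, one_mul] at this
  have h2 := integral_sqrt_sum_sq_stdGauss_le (ι := Fin n₂)
  simp only [Fintype.card_fin] at h h2
  linarith

/-- Duality between the operator norm and the nuclear norm. -/
theorem sum_mul_le_entryOpNorm_mul_nuclearNorm (X : Matrix (Fin n₁) (Fin n₂) ℝ)
    (h : Fin n₁ × Fin n₂ → ℝ) :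
    ∑ i, ∑ j, X i j * h (i, j) ≤ entryOpNorm h * nuclearNorm X := by
  set hX := Matrix.isHermitian_mul_conjTranspose_self X
  set b := hX.eigenvectorBasis
  have hq : ∀ r, ∑ i, b r i ^ 2 = 1 := fun r => by
    rw [← EuclideanSpace.real_norm_sq_eq, b.orthonormal.1 r, one_pow]
  have hsv : ∀ r, √(∑ j, (∑ i, X i j * b r i) ^ 2) = singVals X r := by
    intro r
    rw [singVals, hX.eigenvalues_eq]
    congr 1
    simp only [star_trivial, RCLike.re_to_real, Matrix.conjTranspose_eq_transpose_of_trivial]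
    rw [← Matrix.mulVec_mulVec, Matrix.dotProduct_mulVec, ← Matrix.mulVec_transpose]
    simp only [dotProduct, Matrix.mulVec, Matrix.transpose_apply, ← sq]
    rfl
  have hpars : ∀ j, ∑ i, X i j * h (i, j) =
      ∑ r, (∑ i, X i j * b r i) * ∑ i, h (i, j) * b r i := by
    intro j
    have := b.sum_inner_mul_inner (WithLp.toLp 2 fun i => X i j) (WithLp.toLp 2 fun i => h (i, j))
    simp only [PiLp.inner_apply, RCLike.inner_apply, conj_trivial] at this
    rw [Finset.sum_congr rfl fun i _ => mul_comm (X i j) (h (i, j)), ← this]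
    refine Finset.sum_congr rfl fun r _ => ?_
    congr 1
    exact Finset.sum_congr rfl fun i _ => mul_comm _ _
  calc ∑ i, ∑ j, X i j * h (i, j)
      = ∑ r, ∑ j, (∑ i, X i j * b r i) * ∑ i, h (i, j) * b r i := by
        rw [Finset.sum_comm, Finset.sum_congr rfl fun j _ => hpars j, Finset.sum_comm]
    _ ≤ ∑ r, singVals X r * entryOpNorm h := by
        refine Finset.sum_le_sum fun r _ => ?_
        refine (Real.sum_mul_le_sqrt_mul_sqrt _ _ _).trans ?_
        rw [hsv]
        refine mul_le_mul_of_nonneg_left ?_ (Real.sqrt_nonneg _)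
        simpa [hq r] using sqrt_sum_sq_vecMul_le h (b r)
    _ = entryOpNorm h * nuclearNorm X := by
        rw [nuclearNorm, ← Finset.sum_mul, mul_comm]

end OperatorNorm

theorem sum_sq_eq_frobNorm_sq {n₁ n₂ : ℕ} (X : Matrix (Fin n₁) (Fin n₂) ℝ) :
    ∑ p : Fin n₁ × Fin n₂, X p.1 p.2 ^ 2 = frobNorm X ^ 2 := by
  rw [frobNorm, Real.sq_sqrt (by positivity), Fintype.sum_prod_type]

theorem frobNorm_pos {n₁ n₂ : ℕ} {X : Matrix (Fin n₁) (Fin n₂) ℝ} (hX : X ≠ 0) :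
    0 < frobNorm X := by
  refine Real.sqrt_pos.2 (lt_of_le_of_ne (by positivity) fun h => hX ?_)
  rw [← Fintype.sum_prod_type', eq_comm,
    Finset.sum_eq_zero_iff_of_nonneg fun _ _ => sq_nonneg _] at h
  ext i j
  simpa using h (i, j) (Finset.mem_univ _)

theorem nuclearNorm_le_of_lstarRank_le {n₁ n₂ : ℕ} {X : Matrix (Fin n₁) (Fin n₂) ℝ} (hX : X ≠ 0)
    {τ : ℝ} (h : lstarRank X ≤ τ) : nuclearNorm X ≤ √τ * frobNorm X := by
  have hF := frobNorm_pos hX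
  rw [← div_le_iff₀ hF]
  refine Real.le_sqrt_of_sq_le ?_
  rwa [div_pow]

theorem vnorm_scaledOp {m n₁ n₂ : ℕ} (ω : (Fin m × Fin n₁ × Fin n₂) → ℝ)
    (X : Matrix (Fin n₁) (Fin n₂) ℝ) : vnorm (scaledOp ω X) =
      √(∑ k, (∑ p : Fin n₁ × Fin n₂, X p.1 p.2 * ω (k, p)) ^ 2) / √m := by
  have h : ∀ k, opOf (ensembleMatrices ω) X k = ∑ p : Fin n₁ × Fin n₂, X p.1 p.2 * ω (k, p) := by
    intro k
    simp only [opOf, matInner, ensembleMatrices, Matrix.trace, Matrix.diag, Matrix.mul_apply,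
      Matrix.transpose_apply, Matrix.of_apply, Fintype.sum_prod_type]
    rw [Finset.sum_comm]
    exact Finset.sum_congr rfl fun i _ => Finset.sum_congr rfl fun j _ => mul_comm _ _
  simp only [vnorm, scaledOp, h, div_pow, ← Finset.sum_div]
  rw [Real.sqrt_div (by positivity), Real.sqrt_sq (Real.sqrt_nonneg _)]

/-- for the Gaussian ensemble, `E[ρ_τ^max(𝒜/√m)] ≤ 1 + 3√(τ n₂/m)`. -/
theorem stmt13 {m n₁ n₂ : ℕ} (hn : n₁ ≤ n₂) (τ : ℝ) (hτ1 : 1 ≤ τ) (hτ2 : τ ≤ (n₁ : ℝ)) :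
    (∫ ω, cmsvMax (scaledOp ω) τ ∂(gaussianEnsemble m n₁ n₂)) ≤
      1 + 3 * Real.sqrt (τ * n₂ / m) := by
  have hR : 0 ≤ 1 + 3 * Real.sqrt (τ * n₂ / m) := by positivity
  by_cases hint : Integrable (fun ω => cmsvMax (scaledOp ω) τ) (gaussianEnsemble m n₁ n₂)
  swap
  · rw [integral_undef hint]; exact hR
  rcases Nat.eq_zero_or_pos m with rfl | hm
  · have : ∀ ω : Fin 0 × Fin n₁ × Fin n₂ → ℝ, cmsvMax (scaledOp ω) τ ≤ 0 := fun ω => by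
      refine Real.sSup_nonpos ?_
      rintro c ⟨X, -, -, rfl⟩
      simp [vnorm]
    exact (integral_nonpos this).trans hR
  by_cases hex : ∃ X : Matrix (Fin n₁) (Fin n₂) ℝ, X ≠ 0 ∧ lstarRank X ≤ τ
  swap
  · have : ∀ ω : Fin m × Fin n₁ × Fin n₂ → ℝ, cmsvMax (scaledOp ω) τ ≤ 0 := fun ω => by
      refine Real.sSup_nonpos ?_
      rintro c ⟨X, hX, hXτ, -⟩
      exact absurd ⟨X, hX, hXτ⟩ hex
    exact (integral_nonpos this).trans hR
  have hn₁ : 0 < n₁ := by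
    have : (0 : ℝ) < n₁ := by linarith
    exact_mod_cast this
  have : Nonempty (Fin m) := ⟨⟨0, hm⟩⟩
  have : Nonempty (Fin n₁) := ⟨⟨0, hn₁⟩⟩
  have : Nonempty (Fin n₂) := ⟨⟨0, by omega⟩⟩
  have hsm : 0 < √(m : ℝ) := Real.sqrt_pos.2 (by exact_mod_cast hm)
  set T : Set (Fin n₁ × Fin n₂ → ℝ) :=
    {v | ∑ p, v p ^ 2 = 1 ∧ ∀ h, ∑ p, v p * h p ≤ √τ * entryOpNorm h} with hTdef
  have hmem : ∀ X : Matrix (Fin n₁) (Fin n₂) ℝ, X ≠ 0 → lstarRank X ≤ τ →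
      (fun p : Fin n₁ × Fin n₂ => X p.1 p.2 / frobNorm X) ∈ T := by
    intro X hX hXτ
    have hF := frobNorm_pos hX
    refine ⟨?_, fun h => ?_⟩
    · simp only [div_pow, ← Finset.sum_div, sum_sq_eq_frobNorm_sq]
      exact div_self (by positivity)
    · simp only [div_mul_eq_mul_div, ← Finset.sum_div]
      rw [div_le_iff₀ hF, Fintype.sum_prod_type]
      refine (sum_mul_le_entryOpNorm_mul_nuclearNorm X h).trans ?_
      have := mul_le_mul_of_nonneg_left (nuclearNorm_le_of_lstarRank_le hX hXτ)
        (entryOpNorm_nonneg h)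
      linarith
  have hTne : T.Nonempty := by
    obtain ⟨X, hX, hXτ⟩ := hex
    exact ⟨_, hmem X hX hXτ⟩
  have hdom : ∀ (ω : Fin m × Fin n₁ × Fin n₂ → ℝ) (c : ℝ),
      (∀ u : Fin m → ℝ, ∑ k, u k ^ 2 = 1 → ∀ v ∈ T,
        ∑ p : Fin m × Fin n₁ × Fin n₂, u p.1 * v p.2 * ω p ≤ c) →
      √m * cmsvMax (scaledOp ω) τ ≤ c := by
    intro ω c hc
    rw [mul_comm, ← le_div_iff₀ hsm]
    refine csSup_le ?_ ?_
    · obtain ⟨X, hX, hXτ⟩ := hex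
      exact ⟨_, X, hX, hXτ, rfl⟩
    rintro _ ⟨X, hX, hXτ, rfl⟩
    have hF := frobNorm_pos hX
    rw [vnorm_scaledOp, div_right_comm]
    refine div_le_div_of_nonneg_right ?_ hsm.le
    obtain ⟨u, hu, hue⟩ :=
      exists_unit_sum_mul_eq fun k => ∑ p : Fin n₁ × Fin n₂, X p.1 p.2 * ω (k, p)
    refine le_trans (le_of_eq ?_) (hc u hu _ (hmem X hX hXτ))
    rw [← hue, Fintype.sum_prod_type, Finset.sum_div]
    refine Finset.sum_congr rfl fun k _ => ?_
    rw [Finset.mul_sum, Finset.sum_div]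
    exact Finset.sum_congr rfl fun p _ => by ring
  have hch := integral_le_of_chevet (fun v hv => hv.1) hTne (hint.const_mul √m)
    (integrable_entryOpNorm.const_mul √τ) hdom fun h v hv => hv.2 h
  rw [integral_const_mul, integral_const_mul, Fintype.card_fin] at hch
  have hn' : √(n₁ : ℝ) ≤ √n₂ := Real.sqrt_le_sqrt (by exact_mod_cast hn)
  have hop := mul_le_mul_of_nonneg_left
    ((integral_entryOpNorm_le (n₁ := n₁) (n₂ := n₂)).trans (add_le_add_left hn' _))
    (Real.sqrt_nonneg τ)
  have hsq : √m * √(τ * n₂ / m) = √τ * √n₂ := by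
    rw [Real.sqrt_div (by positivity), Real.sqrt_mul (by positivity), mul_div_cancel₀ _ hsm.ne']
  refine le_of_mul_le_mul_left (hch.trans ?_) hsm
  have := mul_nonneg (Real.sqrt_nonneg τ) (Real.sqrt_nonneg (n₂ : ℝ))
  linear_combination hop + this + (-3) * hsq

end
end
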